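/- Let K be a Kalton–Roberts constant and let Ω be a compact metric space. Then for every finite set algebra F, every 1-additive map ν : F → C(Ω, ℝ) and every ε > 0 there exists a vector measure μ : F → C(Ω, ℝ) with ‖ν(A) − μ(A)‖ ≤ K + ε for all A ∈ F; in particular C(Ω, ℝ) has the ω-SVM property with constant K + ε for every ε > 0. -/

import Mathlib

open Cardinal ENNReal

/-- A set algebra: contains `∅`, closed under complements and finite unions. -/
def IsSetAlg {Ω : Type*} (F : Set (Set Ω)) : Prop :=
  ∅ ∈ F ∧ (∀ A ∈ F, Aᶜ ∈ F) ∧ ∀ A ∈ F, ∀ B ∈ F, A ∪ B ∈ F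

/-- `ν` is 1-additive on the set algebra `F`. -/
def OneAdd {Ω X : Type*} [SeminormedAddCommGroup X] (F : Set (Set Ω)) (ν : Set Ω → X) : Prop :=
  ∀ A ∈ F, ∀ B ∈ F, Disjoint A B → ‖ν (A ∪ B) - ν A - ν B‖ ≤ 1

/-- `μ` is a (finitely additive) vector measure on the set algebra `F`. -/
def VectMeas {Ω X : Type*} [AddCommGroup X] (F : Set (Set Ω)) (μ : Set Ω → X) : Prop :=
  ∀ A ∈ F, ∀ B ∈ F, Disjoint A B → μ (A ∪ B) = μ A + μ B

/-- `K` is a Kalton–Roberts constant. -/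
def IsKRConst (K : ℝ) : Prop :=
  ∀ (Ω : Type) (F : Set (Set Ω)), IsSetAlg F →
    ∀ ν : Set Ω → ℝ, OneAdd F ν →
      ∃ μ : Set Ω → ℝ, VectMeas F μ ∧ ∀ A ∈ F, |ν A - μ A| ≤ K

/-- `X` has the SVM property with constant `v` (arbitrary set algebras). -/
def HasSVMBound (X : Type*) [SeminormedAddCommGroup X] (v : ℝ) : Prop :=
  ∀ (Ω : Type) (F : Set (Set Ω)), IsSetAlg F →
    ∀ ν : Set Ω → X, OneAdd F ν →
      ∃ μ : Set Ω → X, VectMeas F μ ∧ ∀ A ∈ F, ‖ν A - μ A‖ ≤ v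

/-- `X` has the ω-SVM property with constant `v` (finite set algebras). -/
def HasOmegaSVMBound (X : Type*) [SeminormedAddCommGroup X] (v : ℝ) : Prop :=
  ∀ (Ω : Type) (F : Set (Set Ω)), IsSetAlg F → F.Finite →
    ∀ ν : Set Ω → X, OneAdd F ν →
      ∃ μ : Set Ω → X, VectMeas F μ ∧ ∀ A ∈ F, ‖ν A - μ A‖ ≤ v

/-- `X` has the κ-SVM property with constant `v` (set algebras of cardinality `< κ`). -/
def HasKappaSVMBound (X : Type*) [SeminormedAddCommGroup X] (κ : Cardinal) (v : ℝ) : Prop :=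
  ∀ (Ω : Type) (F : Set (Set Ω)), IsSetAlg F → #(↥F) < κ →
    ∀ ν : Set Ω → X, OneAdd F ν →
      ∃ μ : Set Ω → X, VectMeas F μ ∧ ∀ A ∈ F, ‖ν A - μ A‖ ≤ v

/-!
Restricting to a finite `F` places the 1-additive maps in the seminormed space `X ^ F`. There, a
measure within `v` of `p` is within `v + ε` of every map near `p`, and the measures within a given
distance of a map form a convex set, so a partition of unity yields a measure within `v + ε` of `p`
depending continuously on `p`. Composing this selection with `y ↦ (ν A y)_A` gives a vector measure
with values in continuous functions.
-/

theorem convex_setOf_vectMeas {Ω X : Type*} [AddCommGroup X] [Module ℝ X] {F : Set (Set Ω)} :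
    Convex ℝ {μ : Set Ω → X | VectMeas F μ} := by
  intro μ hμ μ' hμ' a b _ _ _ A hA B hB hAB
  simp only [Pi.add_apply, Pi.smul_apply, hμ A hA B hB hAB, hμ' A hA B hB hAB, smul_add]
  abel

section Selection

variable {Ω X : Type*} [SeminormedAddCommGroup X] {F : Set (Set Ω)}

/-- The vector measures on `F` at uniform distance at most `r` from `p`. Only values on `F` are
relevant, so `p` is defined on `F` alone: for finite `F` the space `F → X` is then
pseudometrizable. -/
def approxMeasures (p : F → X) (r : ℝ) : Set (Set Ω → X) :=
  {μ | VectMeas F μ ∧ ∀ A : F, ‖p A - μ A‖ ≤ r}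

theorem approxMeasures_subset_of_dist_le [Fintype F] {p q : F → X} {r ε : ℝ}
    (hpq : dist q p ≤ ε) : approxMeasures p r ⊆ approxMeasures q (r + ε) := by
  rintro μ ⟨hμ, hpμ⟩
  refine ⟨hμ, fun A => ?_⟩
  calc ‖q A - μ A‖ ≤ ‖q A - p A‖ + ‖p A - μ A‖ := norm_sub_le_norm_sub_add_norm_sub ..
    _ ≤ ε + r := by
      gcongr
      · exact dist_eq_norm (q A) (p A) ▸ (dist_le_pi_dist q p A).trans hpq
      · exact hpμ A
    _ = r + ε := add_comm ..

variable [NormedSpace ℝ X]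

theorem convex_approxMeasures (p : F → X) (r : ℝ) : Convex ℝ (approxMeasures p r) := by
  rintro μ ⟨hμ, hpμ⟩ μ' ⟨hμ', hpμ'⟩ a b ha hb hab
  refine ⟨convex_setOf_vectMeas hμ hμ' ha hb hab, fun A => ?_⟩
  simp only [← mem_closedBall_iff_norm'] at hpμ hpμ' ⊢
  exact convex_closedBall (p A) r (hpμ A) (hpμ' A) ha hb hab

theorem exists_continuous_forall_mem_approxMeasures [Finite F] (v : ℝ) {ε : ℝ} (hε : 0 < ε) :
    ∃ g : C({p : F → X // (approxMeasures p v).Nonempty}, Set Ω → X),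
      ∀ p, g p ∈ approxMeasures p.1 (v + ε) := by
  have := Fintype.ofFinite F
  refine exists_continuous_forall_mem_convex_of_local_const
    (fun p => convex_approxMeasures p.1 (v + ε)) fun ⟨p, μ, hμ⟩ => ⟨μ, ?_⟩
  filter_upwards [Metric.closedBall_mem_nhds _ hε] with q hq
  exact approxMeasures_subset_of_dist_le hq hμ

theorem exists_vectMeas_continuousMap_forall_norm_sub_le {S : Type*} [TopologicalSpace S]
    [Finite F] {ν : Set Ω → C(S, X)} {v ε : ℝ} (hε : 0 < ε)
    (hν : ∀ y, (approxMeasures (fun A : F => ν A y) v).Nonempty) :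
    ∃ μ : Set Ω → C(S, X), VectMeas F μ ∧ ∀ A ∈ F, ∀ y, ‖ν A y - μ A y‖ ≤ v + ε := by
  obtain ⟨g, hg⟩ := exists_continuous_forall_mem_approxMeasures (F := F) (X := X) v hε
  let valuesAt : C(S, {p : F → X // (approxMeasures p v).Nonempty}) :=
    ⟨fun y => ⟨fun A => ν A y, hν y⟩, by fun_prop⟩
  refine ⟨fun A => ⟨fun y => g (valuesAt y) A, by fun_prop⟩, fun A hA B hB hAB => ?_,
    fun A hA y => (hg (valuesAt y)).2 ⟨A, hA⟩⟩
  ext y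
  exact (hg (valuesAt y)).1 A hA B hB hAB

end Selection

theorem OneAdd.continuousMap_apply {Ω S X : Type*} [TopologicalSpace S] [CompactSpace S]
    [SeminormedAddCommGroup X] {F : Set (Set Ω)} {ν : Set Ω → C(S, X)} (hν : OneAdd F ν) (y : S) :
    OneAdd F fun A => ν A y := fun A hA B hB hAB =>
  ((ν (A ∪ B) - ν A - ν B).norm_coe_le_norm y).trans (hν A hA B hB hAB)

theorem HasOmegaSVMBound.nonneg {X : Type*} [SeminormedAddCommGroup X] {v : ℝ}
    (hX : HasOmegaSVMBound X v) : 0 ≤ v := by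
  obtain ⟨μ, -, hμ⟩ := hX Empty Set.univ ⟨trivial, fun _ _ => trivial, fun _ _ _ _ => trivial⟩
    Set.finite_univ 0 (by simp [OneAdd])
  exact (norm_nonneg _).trans (hμ ∅ trivial)

theorem IsKRConst.hasOmegaSVMBound {K : ℝ} (hK : IsKRConst K) : HasOmegaSVMBound ℝ K :=
  fun Ω F hF _ => hK Ω F hF

theorem stmt_1_general {S X : Type*} [TopologicalSpace S] [CompactSpace S]
    [SeminormedAddCommGroup X] [NormedSpace ℝ X] {v : ℝ} (hX : HasOmegaSVMBound X v)
    {ε : ℝ} (hε : 0 < ε) : HasOmegaSVMBound C(S, X) (v + ε) := by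
  intro Ω F hF hfin ν hν
  have := hfin.to_subtype
  have approx_nonempty (y : S) : (approxMeasures (fun A : F => ν A y) v).Nonempty := by
    obtain ⟨μ, hμ, hνμ⟩ := hX Ω F hF hfin _ (hν.continuousMap_apply y)
    exact ⟨μ, hμ, fun A => hνμ A A.2⟩
  obtain ⟨μ, hμ, hνμ⟩ := exists_vectMeas_continuousMap_forall_norm_sub_le hε approx_nonempty
  have v_add_nonneg : 0 ≤ v + ε := add_nonneg hX.nonneg hε.le
  exact ⟨μ, hμ, fun A hA => (ContinuousMap.norm_le _ v_add_nonneg).2 (hνμ A hA)⟩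

/-- for a compact metric space Ω₀, the space C(Ω₀, ℝ) has the
ω-SVM property with constant K + ε for every ε > 0. -/
theorem stmt_1 (K : ℝ) (hK : IsKRConst K)
    (Ω₀ : Type) [MetricSpace Ω₀] [CompactSpace Ω₀]
    (Ω : Type) (F : Set (Set Ω)) (hF : IsSetAlg F) (hfin : F.Finite)
    (ν : Set Ω → ContinuousMap Ω₀ ℝ) (hν : OneAdd F ν)
    (ε : ℝ) (hε : 0 < ε) :
    ∃ μ : Set Ω → ContinuousMap Ω₀ ℝ,
      VectMeas F μ ∧ ∀ A ∈ F, ‖ν A - μ A‖ ≤ K + ε :=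
  stmt_1_general hK.hasOmegaSVMBound hε Ω F hF hfin ν hν
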